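/- arXiv:2505.22478 — 2 statements merged into one kernel-verified Lean document; each statement's English description precedes it below -/
import Mathlib

section
/- Hölder bound for low-frequency projections (Lemma 2.2, estimate (2.4)). Let α ∈ [0,1), D ≥ 1, R ≥ 10, and let N ≥ 1 be dyadic. There exists a constant C = C(α,D) such that for every measurable φ : ℝ → ℂ with ‖⟨x⟩^{-D} φ‖_{L¹(ℝ)} < ∞, one has ‖P_{≤N} φ‖_{C^α([-R,R])} ≤ C ( N^α ‖φ‖_{C⁰([-2R,2R])} + (RN)^{-D} ‖⟨x⟩^{-D} φ‖_{L¹(ℝ)} ). -/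
open MeasureTheory Real Set ENNReal

noncomputable section

/-- The Japanese bracket `⟨x⟩ = √(1 + x²)`. -/
def jap (x : ℝ) : ℝ := Real.sqrt (1 + x ^ 2)

/-- The inverse Fourier transform `ǧ(x) = (2π)^{-1/2} ∫ g(ξ) e^{i x ξ} dξ`. -/
def invFourier (g : ℝ → ℝ) (x : ℝ) : ℂ :=
  (Real.sqrt (2 * Real.pi) : ℂ)⁻¹ * ∫ ξ : ℝ, (g ξ : ℂ) * Complex.exp (Complex.I * ((x * ξ : ℝ) : ℂ))

/-- `ρ` is an admissible Littlewood–Paley bump function: smooth, `[0,1]`-valued, equal to `1`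
on `[-1,1]` and vanishing outside of `[-9/8, 9/8]`. -/
def IsLPBump (ρ : ℝ → ℝ) : Prop :=
  ContDiff ℝ (⊤ : ℕ∞) ρ ∧ (∀ ξ, ρ ξ ∈ Set.Icc (0 : ℝ) 1) ∧
    (∀ ξ ∈ Set.Icc (-1 : ℝ) 1, ρ ξ = 1) ∧
    ∀ ξ, ξ ∉ Set.Icc (-(9/8) : ℝ) (9/8) → ρ ξ = 0

/-- The symbol `ρ_{≤N}(ξ) = ρ(ξ/N)`. -/
def rhoLE (ρ : ℝ → ℝ) (N : ℝ) (ξ : ℝ) : ℝ := ρ (ξ / N)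

open scoped Classical in
/-- The symbol `ρ_N`: `ρ_1 = ρ_{≤1}` and `ρ_N = ρ_{≤N} - ρ_{≤N/2}` for dyadic `N ≥ 2`. -/
def rhoD (ρ : ℝ → ℝ) (N : ℝ) (ξ : ℝ) : ℝ :=
  if N = 1 then ρ ξ else ρ (ξ / N) - ρ (2 * ξ / N)

/-- The Littlewood–Paley projection `P_{≤N} φ = ρ̌_{≤N} ∗ φ`. -/
def PLE (ρ : ℝ → ℝ) (N : ℝ) (φ : ℝ → ℂ) (x : ℝ) : ℂ :=
  ∫ y : ℝ, invFourier (rhoLE ρ N) y * φ (x - y)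

/-- The Littlewood–Paley projection `P_N φ = ρ̌_N ∗ φ`. -/
def PD (ρ : ℝ → ℝ) (N : ℝ) (φ : ℝ → ℂ) (x : ℝ) : ℂ :=
  ∫ y : ℝ, invFourier (rhoD ρ N) y * φ (x - y)

/-- The weighted norm `‖⟨x⟩^{-D} φ‖_{L¹(ℝ)}`. -/
def wL1 (D : ℝ) (φ : ℝ → ℂ) : ℝ := ∫ x : ℝ, jap x ^ (-D) * ‖φ x‖

/-- The `ℝ≥0∞`-valued sup-norm `‖φ‖_{C⁰(I)}`. -/
def supNormE (I : Set ℝ) (φ : ℝ → ℂ) : ℝ≥0∞ := ⨆ x ∈ I, (‖φ x‖₊ : ℝ≥0∞)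

/-- The `ℝ≥0∞`-valued Hölder seminorm on `I`. -/
def holderSemiE (α : ℝ) (I : Set ℝ) (φ : ℝ → ℂ) : ℝ≥0∞ :=
  ⨆ x ∈ I, ⨆ y ∈ I, ⨆ _ : x ≠ y, ⨆ _ : |x - y| ≤ 1,
    ENNReal.ofReal (‖φ x - φ y‖ / |x - y| ^ α)

open scoped Classical in
/-- The `ℝ≥0∞`-valued Hölder norm `‖φ‖_{C^α(I)}`; for `α = 0` it is the sup-norm. -/
def holderNormE (α : ℝ) (I : Set ℝ) (φ : ℝ → ℂ) : ℝ≥0∞ :=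
  if α = 0 then supNormE I φ else supNormE I φ + holderSemiE α I φ

/-- The polynomially decaying weight `(1 + |u|)^{-m}`. -/
def decayWeight (m : ℕ) (u : ℝ) : ℝ := ((1 + |u|) ^ m)⁻¹

lemma decayWeight_pos (m : ℕ) (u : ℝ) : 0 < decayWeight m u := by
  unfold decayWeight; positivity

lemma continuous_decayWeight (m : ℕ) : Continuous (decayWeight m) := by
  unfold decayWeight
  exact Continuous.inv₀ (by fun_prop) fun u => by positivity

lemma decayWeight_le_of_abs_sub_le_one (m : ℕ) {u w : ℝ} (h : |u - w| ≤ 1) :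
    decayWeight m w ≤ 2 ^ m * decayWeight m u := by
  unfold decayWeight
  rw [← div_eq_mul_inv, inv_eq_one_div, div_le_div_iff₀ (by positivity) (by positivity), one_mul,
    ← mul_pow]
  have := abs_sub_abs_le_abs_sub u w
  gcongr
  linarith [abs_nonneg w]

lemma decayWeight_le_inv_one_add_sq {m : ℕ} (hm : 2 ≤ m) (u : ℝ) :
    decayWeight m u ≤ (1 + u ^ 2)⁻¹ := by
  unfold decayWeight
  refine inv_anti₀ (by positivity) ?_
  calc 1 + u ^ 2 ≤ (1 + |u|) ^ 2 := by nlinarith [abs_nonneg u, sq_abs u]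
    _ ≤ (1 + |u|) ^ m := pow_le_pow_right₀ (by linarith [abs_nonneg u]) hm

/-- A Schwartz function and its derivative are bounded by any polynomial weight. -/
lemma SchwartzMap.exists_decayWeight_bound (K : SchwartzMap ℝ ℂ) (m : ℕ) :
    ∃ B : ℝ, 0 < B ∧ ∀ u, ‖K u‖ ≤ B * decayWeight m u ∧ ‖deriv K u‖ ≤ B * decayWeight m u := by
  set B := 2 ^ m * (Finset.Iic (m, 1)).sup (fun i => SchwartzMap.seminorm ℝ i.1 i.2) K with hB
  refine ⟨|B| + 1, by positivity, fun u => ?_⟩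
  have key : ∀ n ≤ 1, ‖iteratedFDeriv ℝ n K u‖ ≤ (|B| + 1) * decayWeight m u := by
    intro n hn
    have h := SchwartzMap.one_add_le_sup_seminorm_apply (𝕜 := ℝ) (m := (m, 1)) (k := m) (n := n)
      le_rfl hn K u
    rw [decayWeight, ← div_eq_mul_inv, le_div_iff₀ (by positivity), mul_comm]
    exact h.trans (by rw [← hB]; linarith [le_abs_self B])
  have h0 := key 0 zero_le_one
  have h1 := key 1 le_rfl
  rw [norm_iteratedFDeriv_zero] at h0
  rw [norm_iteratedFDeriv_eq_norm_iteratedDeriv, iteratedDeriv_one] at h1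
  exact ⟨h0, h1⟩

/-- Weighted Hölder continuity of a function which decays together with its derivative. -/
lemma norm_sub_le_rpow_mul_decayWeight {K : ℝ → ℂ} (hK : Differentiable ℝ K) {m : ℕ} {B : ℝ}
    (hB : 0 ≤ B) (hb : ∀ u, ‖K u‖ ≤ B * decayWeight m u)
    (hb' : ∀ u, ‖deriv K u‖ ≤ B * decayWeight m u) {α : ℝ} (hα0 : 0 ≤ α) (hα1 : α ≤ 1) (u v : ℝ) :
    ‖K u - K v‖ ≤ 2 ^ m * B * |u - v| ^ α * (decayWeight m u + decayWeight m v) := by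
  have hu := decayWeight_pos m u
  have hv := decayWeight_pos m v
  have h2 : (1 : ℝ) ≤ 2 ^ m := one_le_pow₀ one_le_two
  rcases le_total 1 |u - v| with h | h
  · have h3 : (1 : ℝ) ≤ 2 ^ m * |u - v| ^ α := one_le_mul_of_one_le_of_one_le h2 (one_le_rpow h hα0)
    calc ‖K u - K v‖ ≤ ‖K u‖ + ‖K v‖ := norm_sub_le _ _
      _ ≤ 1 * (B * (decayWeight m u + decayWeight m v)) := by linarith [hb u, hb v]
      _ ≤ (2 ^ m * |u - v| ^ α) * (B * (decayWeight m u + decayWeight m v)) := by gcongr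
      _ = _ := by ring
  · have hmv : ‖K u - K v‖ ≤ (B * (2 ^ m * decayWeight m u)) * ‖u - v‖ := by
      refine Convex.norm_image_sub_le_of_norm_deriv_le (s := uIcc u v) (fun x _ => hK x) ?_
        (convex_uIcc u v) right_mem_uIcc left_mem_uIcc
      intro x hx
      refine (hb' x).trans ?_
      gcongr
      apply decayWeight_le_of_abs_sub_le_one
      rw [abs_sub_comm]
      refine (abs_sub_left_of_mem_uIcc hx).trans ?_
      rwa [abs_sub_comm]
    have hpow : |u - v| ≤ |u - v| ^ α := by
      rcases (abs_nonneg (u - v)).eq_or_lt with h0 | h0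
      · rw [← h0]; positivity
      · simpa using rpow_le_rpow_of_exponent_ge h0 h hα1
    calc ‖K u - K v‖ ≤ (B * (2 ^ m * decayWeight m u)) * |u - v| := hmv
      _ ≤ (B * (2 ^ m * (decayWeight m u + decayWeight m v))) * |u - v| ^ α := by
        gcongr; linarith
      _ = _ := by ring

/-- The kernels of `P_{≤N}` are the `L¹`-rescalings of a single Schwartz function. -/
lemma IsLPBump.exists_schwartz_kernel {ρ : ℝ → ℝ} (hρ : IsLPBump ρ) :
    ∃ K : SchwartzMap ℝ ℂ, ∀ N : ℝ, 0 < N → ∀ y, invFourier (rhoLE ρ N) y = N * K (N * y) := by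
  obtain ⟨hsmooth, -, -, hsupp⟩ := hρ
  set c : ℂ := (Real.sqrt (2 * Real.pi) : ℂ)⁻¹
  set f : ℝ → ℂ := fun η => c * (2 * π : ℝ) * (ρ (2 * π * η) : ℝ)
  have hf : ContDiff ℝ (⊤ : ℕ∞) f := by
    refine contDiff_const.mul (Complex.ofRealCLM.contDiff.comp (hsmooth.comp ?_))
    fun_prop
  have hfc : HasCompactSupport f := by
    refine HasCompactSupport.intro (isCompact_Icc (a := -(9 / 8 : ℝ)) (b := 9 / 8)) fun η hη => ?_
    have : ρ (2 * π * η) = 0 := by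
      refine hsupp _ fun h => hη ?_
      rw [mem_Icc, ← abs_le] at h ⊢
      rw [abs_mul, abs_of_pos two_pi_pos] at h
      nlinarith [abs_nonneg η, pi_gt_three]
    simp [f, this]
  refine ⟨FourierTransformInv.fourierInv (hfc.toSchwartzMap hf), fun N hN y => ?_⟩
  rw [SchwartzMap.fourierInv_coe, Real.fourierInv_eq']
  have hpos : 0 < 2 * π * N := by positivity
  have hscale := Measure.integral_comp_mul_left
    (fun ξ : ℝ => (rhoLE ρ N ξ : ℂ) * Complex.exp (Complex.I * ((y * ξ : ℝ) : ℂ))) (2 * π * N)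
  rw [abs_of_pos (inv_pos.2 hpos), eq_inv_smul_iff₀ hpos.ne'] at hscale
  rw [invFourier, ← hscale, Complex.real_smul, ← integral_const_mul, ← integral_const_mul,
    ← integral_const_mul]
  refine integral_congr_ae (.of_forall fun η => ?_)
  have hr : rhoLE ρ N (2 * π * N * η) = ρ (2 * π * η) := by
    unfold rhoLE
    congr 1
    field_simp
  simp only [hr, f, c, HasCompactSupport.toSchwartzMap_toFun, smul_eq_mul,
    RCLike.inner_apply, conj_trivial]
  have he : Complex.I * ((y * (2 * π * N * η) : ℝ) : ℂ)
      = ((2 * π * (N * y * η) : ℝ) : ℂ) * Complex.I := by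
    push_cast; ring
  rw [he]
  push_cast
  ring

lemma one_le_jap (z : ℝ) : 1 ≤ jap z := one_le_sqrt.2 (by nlinarith [sq_nonneg z])

/-- Away from `[-2R, 2R]`, the rescaled weight is dominated by `⟨z⟩^{-D}` with a gain. -/
lemma decayWeight_far_le {m : ℕ} {D R N x z : ℝ} (hD : 0 ≤ D) (hm : 2 * D + 2 ≤ m) (hR : 1 ≤ R)
    (hN : 1 ≤ N) (hx : |x| ≤ R) (hz : 2 * R < |z|) :
    N * decayWeight m (N * (x - z)) ≤ 4 ^ D * N⁻¹ * (R * N) ^ (-D) * jap z ^ (-D) := by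
  set t := |z| / 2 with ht
  have hRt : R ≤ t := by linarith
  have ht1 : 1 ≤ N * t := one_le_mul_of_one_le_of_one_le hN (hR.trans hRt)
  have hjap : 0 < jap z := one_pos.trans_le (one_le_jap z)
  have hjt : jap z ≤ 4 * t := by
    rw [jap, sqrt_le_left (by linarith)]
    nlinarith [sq_abs z]
  have hxz : N * t ≤ |N * (x - z)| := by
    rw [abs_mul, abs_of_pos (by linarith)]
    gcongr
    have := abs_sub_abs_le_abs_sub z x
    rw [abs_sub_comm] at this
    linarith
  have hlow : N ^ 2 * ((R * N) ^ D * (jap z / 4) ^ D) ≤ (1 + |N * (x - z)|) ^ m := by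
    calc N ^ 2 * ((R * N) ^ D * (jap z / 4) ^ D)
        ≤ (N * t) ^ 2 * ((N * t) ^ D * (N * t) ^ D) := by
          have h1 : N ≤ N * t := by nlinarith
          have h2 : R * N ≤ N * t := by nlinarith
          have h3 : jap z / 4 ≤ N * t := by nlinarith
          gcongr
      _ = (N * t) ^ (2 * D + 2) := by
          rw [← rpow_add (by linarith), ← Real.rpow_natCast, ← rpow_add (by linarith)]
          congr 1; push_cast; ring
      _ ≤ (N * t) ^ (m : ℝ) := rpow_le_rpow_of_exponent_le ht1 hm
      _ = (N * t) ^ m := Real.rpow_natCast _ _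
      _ ≤ (1 + |N * (x - z)|) ^ m := by gcongr; linarith
  have hN0 : 0 < N := by linarith
  have hR0 : 0 < R := by linarith
  calc N * decayWeight m (N * (x - z))
      ≤ N * (N ^ 2 * ((R * N) ^ D * (jap z / 4) ^ D))⁻¹ := by
        unfold decayWeight
        gcongr
    _ = 4 ^ D * N⁻¹ * (R * N) ^ (-D) * jap z ^ (-D) := by
        rw [div_rpow hjap.le (by norm_num), rpow_neg (by positivity), rpow_neg hjap.le]
        field_simp

/-- The rescaled weight integrates to at most `π` against bounded functions on `[-2R, 2R]`, while
the tail is controlled by the weighted `L¹` norm. -/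
lemma integral_decayWeight_mul_norm_le {m : ℕ} {D R N x S : ℝ} {φ : ℝ → ℂ} (hD : 0 ≤ D)
    (hm : 2 * D + 2 ≤ m) (hR : 1 ≤ R) (hN : 1 ≤ N) (hx : |x| ≤ R) (hφ : Measurable φ)
    (hint : Integrable (fun x => jap x ^ (-D) * ‖φ x‖)) (hS0 : 0 ≤ S)
    (hS : ∀ z ∈ Icc (-(2 * R)) (2 * R), ‖φ z‖ ≤ S) :
    Integrable (fun z => N * decayWeight m (N * (x - z)) * ‖φ z‖) ∧
      ∫ z, N * decayWeight m (N * (x - z)) * ‖φ z‖ ≤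
        π * S + 4 ^ D * N⁻¹ * (R * N) ^ (-D) * wL1 D φ := by
  have hN0 : 0 < N := by linarith
  have hR0 : 0 < R := by linarith
  have hm2 : 2 ≤ m := by
    have : (2 : ℝ) ≤ m := by linarith
    exact_mod_cast this
  set g₁ : ℝ → ℝ := fun z => N * S * (1 + (N * (x - z)) ^ 2)⁻¹
  set g₂ : ℝ → ℝ := fun z => 4 ^ D * N⁻¹ * (R * N) ^ (-D) * (jap z ^ (-D) * ‖φ z‖)
  have hg₁ : Integrable g₁ :=
    ((integrable_inv_one_add_sq.comp_mul_left' hN0.ne').comp_sub_left x).const_mul (N * S)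
  have hg₂ : Integrable g₂ := hint.const_mul _
  have hnn : ∀ z, 0 ≤ N * decayWeight m (N * (x - z)) * ‖φ z‖ := fun z => by
    have := decayWeight_pos m (N * (x - z))
    positivity
  have hle : ∀ z, N * decayWeight m (N * (x - z)) * ‖φ z‖ ≤ g₁ z + g₂ z := by
    intro z
    have hjap : 0 < jap z := one_pos.trans_le (one_le_jap z)
    by_cases hz : z ∈ Icc (-(2 * R)) (2 * R)
    · have h2 : 0 ≤ g₂ z := by positivity
      have : N * decayWeight m (N * (x - z)) * ‖φ z‖ ≤ N * (1 + (N * (x - z)) ^ 2)⁻¹ * S := by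
        gcongr
        · exact decayWeight_le_inv_one_add_sq hm2 _
        · exact hS z hz
      refine this.trans ?_
      simp only [g₁]
      linarith
    · have h1 : 0 ≤ g₁ z := by positivity
      rw [mem_Icc, ← abs_le, not_le] at hz
      have := mul_le_mul_of_nonneg_right (decayWeight_far_le hD hm hR hN hx hz) (norm_nonneg (φ z))
      refine this.trans ?_
      simp only [g₂]
      linarith
  have hmeas : AEStronglyMeasurable (fun z => N * decayWeight m (N * (x - z)) * ‖φ z‖) := by
    have hc : Continuous fun z => N * decayWeight m (N * (x - z)) :=
      continuous_const.mul ((continuous_decayWeight m).comp (by fun_prop))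
    exact hc.aestronglyMeasurable.mul hφ.norm.aestronglyMeasurable
  have hI : Integrable (fun z => N * decayWeight m (N * (x - z)) * ‖φ z‖) :=
    (hg₁.add hg₂).mono' hmeas (.of_forall fun z => by
      rw [norm_of_nonneg (hnn z)]; exact hle z)
  refine ⟨hI, (integral_mono hI (hg₁.add hg₂) hle).trans_eq ?_⟩
  rw [integral_add' hg₁ hg₂]
  congr 1
  · rw [integral_const_mul, integral_sub_left_eq_self (fun z => (1 + (N * z) ^ 2)⁻¹),
      Measure.integral_comp_mul_left (fun z => (1 + z ^ 2)⁻¹), integral_univ_inv_one_add_sq,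
      abs_of_pos (by positivity), smul_eq_mul]
    field_simp
  · rw [integral_const_mul, wL1]

/-- **Hölder bound for low-frequency projections** (Lemma 2.2, estimate (2.4)). -/
theorem PLE_holder_bound (ρ : ℝ → ℝ) (hρ : IsLPBump ρ) (α : ℝ) (hα0 : 0 ≤ α) (hα1 : α < 1)
    (D : ℝ) (hD : 1 ≤ D) :
    ∃ C : ℝ, 0 < C ∧
      ∀ R N : ℝ, 10 ≤ R → (∃ k : ℕ, N = 2 ^ k) →
        ∀ φ : ℝ → ℂ, Measurable φ → Integrable (fun x => jap x ^ (-D) * ‖φ x‖) →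
          holderNormE α (Set.Icc (-R) R) (PLE ρ N φ) ≤
            ENNReal.ofReal C *
              (ENNReal.ofReal (N ^ α) * supNormE (Set.Icc (-(2 * R)) (2 * R)) φ +
                ENNReal.ofReal ((R * N) ^ (-D)) * ENNReal.ofReal (wL1 D φ)) := by
  obtain ⟨K, hK⟩ := hρ.exists_schwartz_kernel
  obtain ⟨m, hm⟩ := exists_nat_ge (2 * D + 2)
  obtain ⟨B, hB, hKB⟩ := K.exists_decayWeight_bound m
  set A : ℝ := 2 ^ m * B
  have hA : 0 < A := by positivity
  refine ⟨(B + 2 * A) * (π + 4 ^ D), by positivity, ?_⟩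
  rintro R N hR ⟨k, hk⟩ φ hφ hint
  have hN : 1 ≤ N := hk ▸ one_le_pow₀ one_le_two
  have hN0 : 0 < N := by linarith
  have hNα : 1 ≤ N ^ α := one_le_rpow hN hα0
  rcases eq_or_ne (supNormE (Icc (-(2 * R)) (2 * R)) φ) ⊤ with htop | htop
  · have h1 : ENNReal.ofReal (N ^ α) ≠ 0 := by
      rw [Ne, ENNReal.ofReal_eq_zero]; linarith
    have h2 : ENNReal.ofReal ((B + 2 * A) * (π + 4 ^ D)) ≠ 0 := by
      rw [Ne, ENNReal.ofReal_eq_zero, not_le]; positivity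
    rw [htop, ENNReal.mul_top h1, top_add, ENNReal.mul_top h2]
    exact le_top
  obtain ⟨S, hS0, hSeq⟩ : ∃ S : ℝ, 0 ≤ S ∧
      supNormE (Icc (-(2 * R)) (2 * R)) φ = ENNReal.ofReal S :=
    ⟨_, ENNReal.toReal_nonneg, (ENNReal.ofReal_toReal htop).symm⟩
  have hS : ∀ z ∈ Icc (-(2 * R)) (2 * R), ‖φ z‖ ≤ S := by
    intro z hz
    have : (‖φ z‖₊ : ℝ≥0∞) ≤ ENNReal.ofReal S :=
      hSeq ▸ le_iSup₂ (f := fun x (_ : x ∈ Icc (-(2 * R)) (2 * R)) => (‖φ x‖₊ : ℝ≥0∞)) z hz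
    rwa [← enorm_eq_nnnorm, ← ofReal_norm, ENNReal.ofReal_le_ofReal_iff hS0] at this
  have hw : 0 ≤ wL1 D φ := integral_nonneg fun z => by
    have := one_pos.trans_le (one_le_jap z)
    positivity
  set X := π * S + 4 ^ D * N⁻¹ * (R * N) ^ (-D) * wL1 D φ with hX
  have hX0 : 0 ≤ X := by positivity
  have hM : ∀ x ∈ Icc (-R) R, Integrable (fun z => N * decayWeight m (N * (x - z)) * ‖φ z‖) ∧
      ∫ z, N * decayWeight m (N * (x - z)) * ‖φ z‖ ≤ X := fun x hx =>
    integral_decayWeight_mul_norm_le (by linarith) hm (by linarith) hN (abs_le.2 hx) hφ hint hS0 hS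
  have hPLE : ∀ x, PLE ρ N φ x = ∫ z, N * K (N * (x - z)) * φ z := by
    intro x
    rw [PLE, ← integral_sub_left_eq_self _ volume x]
    simp only [hK N hN0, _root_.sub_sub_cancel]
  have hbound : ∀ x z, ‖N * K (N * (x - z)) * φ z‖ ≤
      B * (N * decayWeight m (N * (x - z)) * ‖φ z‖) := by
    intro x z
    rw [norm_mul, norm_mul, Complex.norm_of_nonneg hN0.le]
    calc N * ‖K (N * (x - z))‖ * ‖φ z‖
        ≤ N * (B * decayWeight m (N * (x - z))) * ‖φ z‖ := by gcongr; exact (hKB _).1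
      _ = _ := by ring
  have hIntK : ∀ x ∈ Icc (-R) R, Integrable fun z => N * K (N * (x - z)) * φ z := by
    intro x hx
    refine ((hM x hx).1.const_mul B).mono' ?_ (.of_forall (hbound x))
    have hc : Continuous fun z => (N : ℂ) * K (N * (x - z)) :=
      continuous_const.mul (K.continuous.comp (by fun_prop))
    exact hc.aestronglyMeasurable.mul hφ.aestronglyMeasurable
  have hsup : ∀ x ∈ Icc (-R) R, ‖PLE ρ N φ x‖ ≤ B * X := by
    intro x hx
    rw [hPLE]
    refine (norm_integral_le_of_norm_le ((hM x hx).1.const_mul B)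
      (.of_forall (hbound x))).trans ?_
    rw [integral_const_mul]
    exact mul_le_mul_of_nonneg_left (hM x hx).2 hB.le
  have hdiff : ∀ x ∈ Icc (-R) R, ∀ y ∈ Icc (-R) R,
      ‖PLE ρ N φ x - PLE ρ N φ y‖ ≤ 2 * A * N ^ α * X * |x - y| ^ α := by
    intro x hx y hy
    rw [hPLE, hPLE, ← integral_sub (hIntK x hx) (hIntK y hy)]
    have hsum := (hM x hx).1.add (hM y hy).1
    refine (norm_integral_le_of_norm_le (hsum.const_mul (A * (N ^ α * |x - y| ^ α)))
      (.of_forall fun z => ?_)).trans ?_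
    · rw [← sub_mul, ← mul_sub, norm_mul, norm_mul, Complex.norm_of_nonneg hN0.le]
      have h := norm_sub_le_rpow_mul_decayWeight K.differentiable hB.le (fun u => (hKB u).1)
        (fun u => (hKB u).2) hα0 hα1.le (N * (x - z)) (N * (y - z))
      have hsc : N * (x - z) - N * (y - z) = N * (x - y) := by ring
      rw [hsc, abs_mul, abs_of_pos hN0, mul_rpow hN0.le (abs_nonneg _)] at h
      calc _ ≤ N * (2 ^ m * B * (N ^ α * |x - y| ^ α) *
            (decayWeight m (N * (x - z)) + decayWeight m (N * (y - z)))) * ‖φ z‖ := by gcongr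
        _ = _ := by simp only [A, Pi.add_apply]; ring
    · rw [integral_const_mul, integral_add' (hM x hx).1 (hM y hy).1]
      calc _ ≤ A * (N ^ α * |x - y| ^ α) * (X + X) := by
            gcongr
            · exact (hM x hx).2
            · exact (hM y hy).2
        _ = _ := by ring
  have hsupE : supNormE (Icc (-R) R) (PLE ρ N φ) ≤ ENNReal.ofReal (B * X) := by
    refine iSup₂_le fun x hx => ?_
    rw [← enorm_eq_nnnorm, ← ofReal_norm]
    exact ENNReal.ofReal_le_ofReal (hsup x hx)
  have hsemiE : holderSemiE α (Icc (-R) R) (PLE ρ N φ) ≤ ENNReal.ofReal (2 * A * N ^ α * X) := by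
    refine iSup₂_le fun x hx => iSup₂_le fun y hy => iSup₂_le fun hxy _ => ?_
    refine ENNReal.ofReal_le_ofReal ?_
    rw [div_le_iff₀ (rpow_pos_of_pos (abs_pos.2 (sub_ne_zero.2 hxy)) α)]
    exact hdiff x hx y hy
  have hnorm : holderNormE α (Icc (-R) R) (PLE ρ N φ) ≤
      ENNReal.ofReal (B * X + 2 * A * N ^ α * X) := by
    rw [ENNReal.ofReal_add (by positivity) (by positivity), holderNormE]
    split_ifs
    · exact hsupE.trans le_self_add
    · exact add_le_add hsupE hsemiE
  rw [hSeq, ← ENNReal.ofReal_mul (by positivity), ← ENNReal.ofReal_mul (by positivity),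
    ← ENNReal.ofReal_add (by positivity) (by positivity), ← ENNReal.ofReal_mul (by positivity)]
  refine hnorm.trans (ENNReal.ofReal_le_ofReal ?_)
  set W := (R * N) ^ (-D) * wL1 D φ with hW
  have hW0 : 0 ≤ W := by positivity
  have hNX : N ^ α * X ≤ (π + 4 ^ D) * (N ^ α * S + W) := by
    have hNN : N ^ α * N⁻¹ ≤ 1 := by
      rw [← div_eq_mul_inv, div_le_one hN0]
      simpa using rpow_le_rpow_of_exponent_le hN hα1.le
    have h4 : (0 : ℝ) < 4 ^ D := by positivity
    calc N ^ α * X = π * (N ^ α * S) + 4 ^ D * ((N ^ α * N⁻¹) * W) := by rw [hX, hW]; ring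
      _ ≤ π * (N ^ α * S) + 4 ^ D * (1 * W) := by gcongr
      _ ≤ (π + 4 ^ D) * (N ^ α * S + W) := by
        have h5 : 0 ≤ 4 ^ D * (N ^ α * S) := by positivity
        have h6 : 0 ≤ π * W := by positivity
        linarith
  calc B * X + 2 * A * N ^ α * X ≤ B * (N ^ α * X) + 2 * A * N ^ α * X := by
        gcongr
        exact le_mul_of_one_le_left hX0 hNα
    _ = (B + 2 * A) * (N ^ α * X) := by ring
    _ ≤ (B + 2 * A) * ((π + 4 ^ D) * (N ^ α * S + W)) := by gcongr
    _ = _ := by ring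
end
end

section
/- Comparison of weighted frequency-truncated masses at different scales (Lemma 2.5, estimate (2.10)). Let D ≥ 1 and let R₁, R₂ be dyadic with 16 ≤ R₁ ≤ R₂/4. There exists a constant C = C(D) such that for every measurable φ : ℝ → ℂ with ‖⟨x⟩^{-D} φ‖_{L¹(ℝ)} < ∞, one has ‖ √σ_{R₁} · P_{≤R₁} φ ‖_{L²(ℝ)} ≤ C ( ‖ √σ_{R₂} · P_{≤R₂} φ ‖_{L²(ℝ)} + R₁^{-D} ‖⟨x⟩^{-D} φ‖_{L¹(ℝ)} ). -/
open MeasureTheory Real Set ENNReal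

noncomputable section

/-- The weight `σ_R(x) = exp(-⟨x/R⟩)`. -/
def sigmaW (R x : ℝ) : ℝ := Real.exp (-jap (x / R))

/-- The weighted `L²`-norm `‖√σ_R · f‖_{L²(ℝ)}`. -/
def wSigmaL2 (R : ℝ) (f : ℝ → ℂ) : ℝ≥0∞ :=
  eLpNorm (fun x => (Real.sqrt (sigmaW R x) : ℂ) * f x) 2 volume

open scoped FourierTransform SchwartzMap

theorem IsLPBump.hasCompactSupport {ρ : ℝ → ℝ} (hρ : IsLPBump ρ) : HasCompactSupport ρ :=
  HasCompactSupport.intro isCompact_Icc hρ.2.2.2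

/-- The symbol of `P_{≤N}`, rescaled to the frequency normalization of `𝓕`. -/
def symbolSchwartz {ρ : ℝ → ℝ} (hρ : IsLPBump ρ) {N : ℝ} (hN : 0 < N) : 𝓢(ℝ, ℂ) :=
  HasCompactSupport.toSchwartzMap (f := fun η : ℝ => ((ρ (2 * π / N * η) : ℝ) : ℂ))
    ((hρ.hasCompactSupport.comp_homeomorph
      (Homeomorph.mulLeft₀ (2 * π / N) (by positivity))).comp_left Complex.ofReal_zero)
    (Complex.ofRealCLM.contDiff.comp (hρ.1.comp (contDiff_const.mul contDiff_id)))

theorem symbolSchwartz_apply {ρ : ℝ → ℝ} (hρ : IsLPBump ρ) {N : ℝ} (hN : 0 < N) (η : ℝ) :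
    symbolSchwartz hρ hN η = ((ρ (2 * π / N * η) : ℝ) : ℂ) := rfl

theorem invFourier_rhoLE_eq {ρ : ℝ → ℝ} (hρ : IsLPBump ρ) {N : ℝ} (hN : 0 < N) (x : ℝ) :
    invFourier (rhoLE ρ N) x = (√(2 * π) : ℂ) * (𝓕⁻ (symbolSchwartz hρ hN)) x := by
  have htwopi : (0 : ℝ) < 2 * π := by positivity
  have key := Measure.integral_comp_mul_left
    (fun ξ : ℝ => (rhoLE ρ N ξ : ℂ) * Complex.exp (Complex.I * ((x * ξ : ℝ) : ℂ))) (2 * π)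
  have hF : (𝓕⁻ (symbolSchwartz hρ hN)) x = ∫ η : ℝ, (rhoLE ρ N (2 * π * η) : ℂ) *
      Complex.exp (Complex.I * ((x * (2 * π * η) : ℝ) : ℂ)) := by
    rw [SchwartzMap.fourierInv_coe, Real.fourierInv_eq']
    refine integral_congr_ae (.of_forall fun η => ?_)
    simp only [smul_eq_mul, symbolSchwartz_apply, rhoLE, RCLike.inner_apply, conj_trivial]
    rw [mul_comm]
    congr 2
    · rw [div_mul_eq_mul_div]
    · push_cast; ring
  rw [hF, key, abs_of_pos (by positivity), invFourier, Complex.real_smul, ← mul_assoc]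
  congr 1
  have hs : (√(2 * π) : ℂ) ≠ 0 := by
    exact_mod_cast (Real.sqrt_pos.2 htwopi).ne'
  have hs2 : (√(2 * π) : ℂ) * √(2 * π) = (2 * π : ℝ) := by
    exact_mod_cast Real.mul_self_sqrt htwopi.le
  have h0 : ((2 * π : ℝ) : ℂ) ≠ 0 := by exact_mod_cast htwopi.ne'
  rw [Complex.ofReal_inv, ← hs2]
  field_simp

theorem continuous_invFourier_rhoLE {ρ : ℝ → ℝ} (hρ : IsLPBump ρ) {N : ℝ} (hN : 0 < N) :
    Continuous (invFourier (rhoLE ρ N)) := by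
  rw [funext (invFourier_rhoLE_eq hρ hN)]
  exact continuous_const.mul (SchwartzMap.continuous _)

theorem invFourier_rhoLE_scale (ρ : ℝ → ℝ) {N : ℝ} (hN : 0 < N) (x : ℝ) :
    invFourier (rhoLE ρ N) x = N * invFourier (rhoLE ρ 1) (N * x) := by
  have key := Measure.integral_comp_mul_left
    (fun ξ : ℝ => (rhoLE ρ N ξ : ℂ) * Complex.exp (Complex.I * ((x * ξ : ℝ) : ℂ))) N
  have hN' : (N : ℂ) ≠ 0 := by exact_mod_cast hN.ne'
  rw [abs_of_pos (by positivity), Complex.real_smul] at key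
  have h2 : ∫ ξ : ℝ, (rhoLE ρ 1 ξ : ℂ) * Complex.exp (Complex.I * ((N * x * ξ : ℝ) : ℂ)) =
      ∫ ξ : ℝ, (rhoLE ρ N (N * ξ) : ℂ) * Complex.exp (Complex.I * ((x * (N * ξ) : ℝ) : ℂ)) := by
    refine integral_congr_ae (.of_forall fun η => ?_)
    simp only [rhoLE, div_one, mul_div_cancel_left₀ _ hN.ne']
    congr 4; ring
  rw [invFourier, invFourier, h2, key, Complex.ofReal_inv]
  field_simp

/-- Rapid decay of the Littlewood–Paley kernels, uniformly in the scale. -/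
theorem exists_invFourier_rhoLE_decay {ρ : ℝ → ℝ} (hρ : IsLPBump ρ) (M : ℕ) :
    ∃ A : ℝ, 0 < A ∧ ∀ N : ℝ, 0 < N → ∀ x : ℝ,
      ‖invFourier (rhoLE ρ N) x‖ * (1 + N * |x|) ^ M ≤ A * N := by
  set f := 𝓕⁻ (symbolSchwartz hρ one_pos)
  set B := (2 : ℝ) ^ M * ((Finset.Iic (M, 0)).sup
    (fun m => SchwartzMap.seminorm ℝ m.1 m.2 : ℕ × ℕ → Seminorm ℝ 𝓢(ℝ, ℂ))) f
  have hB : 0 ≤ B := by positivity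
  have hf : ∀ x, (1 + |x|) ^ M * ‖f x‖ ≤ B := fun x => by
    simpa using SchwartzMap.one_add_le_sup_seminorm_apply (𝕜 := ℝ) (m := (M, 0)) (k := M) (n := 0)
      le_rfl le_rfl f x
  refine ⟨√(2 * π) * B + 1, by positivity, fun N hN x => ?_⟩
  rw [invFourier_rhoLE_scale ρ hN, invFourier_rhoLE_eq hρ one_pos]
  have h := hf (N * x)
  rw [abs_mul, abs_of_pos hN] at h
  rw [norm_mul, norm_mul, Complex.norm_real, Complex.norm_real, norm_of_nonneg hN.le,
    norm_of_nonneg (Real.sqrt_nonneg _)]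
  calc N * (√(2 * π) * ‖f (N * x)‖) * (1 + N * |x|) ^ M
      = (√(2 * π) * ((1 + N * |x|) ^ M * ‖f (N * x)‖)) * N := by ring
    _ ≤ (√(2 * π) * B + 1) * N := by gcongr; nlinarith [Real.sqrt_nonneg (2 * π)]

/-- A coarse Littlewood–Paley kernel is reproduced by convolution with a finer one. -/
theorem integral_invFourier_rhoLE_mul {ρ : ℝ → ℝ} (hρ : IsLPBump ρ) {N N' : ℝ} (hN : 0 < N)
    (hNN' : N ≤ N' / 4) (x : ℝ) :
    ∫ y : ℝ, invFourier (rhoLE ρ N) y * invFourier (rhoLE ρ N') (x - y) =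
      (√(2 * π) : ℂ) * invFourier (rhoLE ρ N) x := by
  have hN' : 0 < N' := by linarith
  have hmul : SchwartzMap.pairing (ContinuousLinearMap.mul ℂ ℂ) (symbolSchwartz hρ hN)
      (symbolSchwartz hρ hN') = symbolSchwartz hρ hN := by
    ext η
    rw [SchwartzMap.pairing_apply_apply, ContinuousLinearMap.mul_apply', symbolSchwartz_apply,
      symbolSchwartz_apply]
    by_cases h : 2 * π / N * η ∈ Set.Icc (-(9 / 8) : ℝ) (9 / 8)
    · rw [hρ.2.2.1 (2 * π / N' * η), Complex.ofReal_one, mul_one]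
      have e : 2 * π / N' * η = (N / N') * (2 * π / N * η) := by field_simp
      have hq : N / N' ≤ 1 / 4 := by rw [div_le_iff₀ hN']; linarith
      have hq0 : 0 < N / N' := by positivity
      rw [e]
      constructor <;> nlinarith [h.1, h.2]
    · rw [hρ.2.2.2 _ h, Complex.ofReal_zero, zero_mul]
  have hconv := SchwartzMap.convolution_apply (ContinuousLinearMap.mul ℂ ℂ)
    (𝓕⁻ (symbolSchwartz hρ hN)) (𝓕⁻ (symbolSchwartz hρ hN')) x
  have hinv : SchwartzMap.convolution (ContinuousLinearMap.mul ℂ ℂ)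
      (𝓕⁻ (symbolSchwartz hρ hN)) (𝓕⁻ (symbolSchwartz hρ hN')) = 𝓕⁻ (symbolSchwartz hρ hN) := by
    rw [← FourierTransform.fourierInv_fourier_eq (F := 𝓢(ℝ, ℂ)) (SchwartzMap.convolution _ _ _),
      SchwartzMap.fourier_convolution, FourierTransform.fourier_fourierInv_eq,
      FourierTransform.fourier_fourierInv_eq, hmul]
  rw [hinv, convolution_def] at hconv
  simp_rw [invFourier_rhoLE_eq hρ hN, invFourier_rhoLE_eq hρ hN']
  rw [hconv, ← integral_const_mul, ← integral_const_mul]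
  refine integral_congr_ae (.of_forall fun y => ?_)
  simp only [ContinuousLinearMap.mul_apply']
  ring

theorem jap_eq_norm (x : ℝ) : jap x = ‖(1 + x * Complex.I : ℂ)‖ := by
  rw [jap, Complex.norm_def, Complex.normSq_apply]
  simp [sq]

theorem jap_pos (x : ℝ) : 0 < jap x := Real.sqrt_pos.2 (by positivity)

theorem jap_le_jap_add (x y : ℝ) : jap x ≤ jap y + |x - y| := by
  have h : (1 + x * Complex.I : ℂ) = (1 + y * Complex.I) + ((x - y : ℝ) : ℂ) * Complex.I := by
    push_cast; ring
  rw [jap_eq_norm, jap_eq_norm, h]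
  refine (norm_add_le _ _).trans_eq ?_
  rw [norm_mul, Complex.norm_I, mul_one, Complex.norm_real, Real.norm_eq_abs]

theorem jap_le_one_add_abs (x : ℝ) : jap x ≤ 1 + |x| := by
  simpa [jap] using jap_le_jap_add x 0

theorem abs_le_jap (x : ℝ) : |x| ≤ jap x :=
  Real.abs_le_sqrt (by linarith)

theorem exp_half_le_two : Real.exp (1 / 2) ≤ 2 := by
  have h : Real.exp (1 / 2) ^ 2 = Real.exp 1 := by rw [← Real.exp_nat_mul]; norm_num
  nlinarith [Real.exp_one_lt_d9, Real.exp_pos (1 / 2)]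

theorem sqrt_sigmaW (R x : ℝ) : √(sigmaW R x) = Real.exp (-jap (x / R) / 2) := by
  rw [sigmaW, Real.exp_half]

theorem sqrt_sigmaW_le_of_scale_le {R R' : ℝ} (hR : 0 < R) (hRR' : R ≤ R') (x : ℝ) :
    √(sigmaW R x) ≤ √(sigmaW R' x) := by
  have : jap (x / R') ≤ jap (x / R) := by
    refine Real.sqrt_le_sqrt ?_
    rw [div_pow, div_pow]
    gcongr
  rw [sqrt_sigmaW, sqrt_sigmaW]
  gcongr

theorem sqrt_sigmaW_le_of_near {R : ℝ} (hR : 1 ≤ R) {x y : ℝ} (hxy : |y| ≤ 1) :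
    √(sigmaW R x) ≤ 2 * √(sigmaW R (x - y)) := by
  have h := jap_le_jap_add ((x - y) / R) (x / R)
  have h1 : |(x - y) / R - x / R| ≤ 1 := by
    rw [← sub_div, sub_sub_cancel_left, abs_div, abs_neg, abs_of_pos (by linarith : 0 < R)]
    exact (div_le_one (by linarith)).2 (hxy.trans hR)
  rw [sqrt_sigmaW, sqrt_sigmaW]
  calc Real.exp (-jap (x / R) / 2) ≤ Real.exp (1 / 2 + -jap ((x - y) / R) / 2) := by
        gcongr; linarith
    _ = Real.exp (1 / 2) * Real.exp (-jap ((x - y) / R) / 2) := Real.exp_add _ _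
    _ ≤ _ := by gcongr; exact exp_half_le_two

/-- The weight `√σ_R` absorbs any power of `1 + |x|` at the cost of powers of `R`. -/
theorem exists_sqrt_sigmaW_mul_pow_le (n : ℕ) :
    ∃ B : ℝ, 0 < B ∧ ∀ R : ℝ, 1 ≤ R → ∀ x : ℝ,
      √(sigmaW R x) * (1 + |x|) ^ n ≤ B * R ^ (n + 1) * (1 + |x|)⁻¹ := by
  refine ⟨2 * 2 ^ (n + 1) * (n + 1).factorial, by positivity, fun R hR x => ?_⟩
  have hR0 : 0 < R := by linarith
  set t := |x / R| with ht
  have hx : 1 + |x| ≤ R * (1 + t) := by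
    rw [ht, abs_div, abs_of_pos hR0, mul_add, mul_div_cancel₀ _ hR0.ne']
    linarith
  have hexp := Real.pow_div_factorial_le_exp (x := (1 + t) / 2) (by positivity) (n + 1)
  have hhalf : Real.exp ((1 + t) / 2) ≤ 2 * Real.exp (t / 2) := by
    rw [add_div, Real.exp_add]
    gcongr
    exact exp_half_le_two
  have hpow : (1 + t) ^ (n + 1) ≤ 2 * 2 ^ (n + 1) * (n + 1).factorial * Real.exp (t / 2) := by
    have h := hexp.trans hhalf
    rw [div_pow, div_div, div_le_iff₀ (by positivity)] at h
    linarith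
  have hσ : √(sigmaW R x) * Real.exp (t / 2) ≤ 1 := by
    rw [sqrt_sigmaW, ← Real.exp_add, Real.exp_le_one_iff]
    linarith [abs_le_jap (x / R)]
  rw [← div_eq_mul_inv, le_div_iff₀ (by positivity)]
  calc √(sigmaW R x) * (1 + |x|) ^ n * (1 + |x|) = √(sigmaW R x) * (1 + |x|) ^ (n + 1) := by ring
    _ ≤ √(sigmaW R x) * (R * (1 + t)) ^ (n + 1) := by gcongr
    _ = √(sigmaW R x) * (1 + t) ^ (n + 1) * R ^ (n + 1) := by rw [mul_pow]; ring
    _ ≤ √(sigmaW R x) * (2 * 2 ^ (n + 1) * (n + 1).factorial * Real.exp (t / 2)) * R ^ (n + 1) := by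
        gcongr
    _ = 2 * 2 ^ (n + 1) * (n + 1).factorial * (√(sigmaW R x) * Real.exp (t / 2)) * R ^ (n + 1) := by
        ring
    _ ≤ 2 * 2 ^ (n + 1) * (n + 1).factorial * 1 * R ^ (n + 1) := by gcongr
    _ = _ := by ring

/-- **Young's convolution inequality** `L¹ ∗ L² ⊆ L²` for nonnegative functions. -/
theorem lintegral_convolution_sq_le {k g : ℝ → ℝ≥0∞} (hk : Measurable k) (hg : Measurable g) :
    ∫⁻ x, (∫⁻ y, k y * g (x - y)) ^ (2 : ℝ) ≤ (∫⁻ y, k y) ^ (2 : ℝ) * ∫⁻ x, g x ^ (2 : ℝ) := by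
  have hpt : ∀ x, (∫⁻ y, k y * g (x - y)) ^ (2 : ℝ) ≤
      (∫⁻ y, k y) * ∫⁻ y, k y * g (x - y) ^ (2 : ℝ) := fun x => by
    have h := ENNReal.lintegral_mul_norm_pow_le (μ := volume) (f := k)
      (g := fun y => k y * g (x - y) ^ (2 : ℝ)) hk.aemeasurable (by fun_prop)
      (p := 1 / 2) (q := 1 / 2) (by norm_num) (by norm_num) (by norm_num)
    have e : ∀ y, k y ^ (1 / 2 : ℝ) * (k y * g (x - y) ^ (2 : ℝ)) ^ (1 / 2 : ℝ) =
        k y * g (x - y) := fun y => by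
      rw [ENNReal.mul_rpow_of_nonneg _ _ (by norm_num), ← ENNReal.rpow_mul, ← mul_assoc,
        ← ENNReal.rpow_add_of_nonneg _ _ (by norm_num) (by norm_num)]
      norm_num
    simp_rw [e] at h
    calc _ ≤ ((∫⁻ y, k y) ^ (1 / 2 : ℝ) *
          (∫⁻ y, k y * g (x - y) ^ (2 : ℝ)) ^ (1 / 2 : ℝ)) ^ (2 : ℝ) := by gcongr
      _ = _ := by
        rw [ENNReal.mul_rpow_of_nonneg _ _ (by norm_num), ← ENNReal.rpow_mul, ← ENNReal.rpow_mul]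
        norm_num
  calc _ ≤ ∫⁻ x, (∫⁻ y, k y) * ∫⁻ y, k y * g (x - y) ^ (2 : ℝ) := lintegral_mono hpt
    _ = (∫⁻ y, k y) * ∫⁻ x, ∫⁻ y, k y * g (x - y) ^ (2 : ℝ) := by
        rw [lintegral_const_mul]
        exact Measurable.lintegral_prod_right (by fun_prop)
    _ = (∫⁻ y, k y) * ∫⁻ y, k y * ∫⁻ x, g x ^ (2 : ℝ) := by
        rw [lintegral_lintegral_swap (by fun_prop)]
        congr 1
        refine lintegral_congr fun y => ?_
        rw [lintegral_const_mul _ (by fun_prop)]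
        congr 1
        exact lintegral_sub_right_eq_self (fun x => g x ^ (2 : ℝ)) y
    _ = _ := by
        rw [lintegral_mul_const _ hk, ← mul_assoc]
        congr 1
        norm_num [sq]

theorem lintegral_inv_one_add_sq_scale {N : ℝ} (hN : 0 < N) :
    ∫⁻ x : ℝ, ENNReal.ofReal (N * (1 + (N * x) ^ 2)⁻¹) = ENNReal.ofReal π := by
  rw [← ofReal_integral_eq_lintegral_ofReal
    ((integrable_inv_one_add_sq.comp_mul_left' hN.ne').const_mul N)
    (.of_forall fun x => by positivity), integral_const_mul,
    Measure.integral_comp_mul_left (fun y : ℝ => (1 + y ^ 2)⁻¹), integral_univ_inv_one_add_sq,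
    abs_of_pos (by positivity), smul_eq_mul, mul_inv_cancel_left₀ hN.ne']

theorem norm_le_weight_mul {D : ℝ} (hD : 0 ≤ D) {n : ℕ} (hn : D ≤ n) (φ : ℝ → ℂ) (x y z : ℝ) :
    ‖φ (x - y - z)‖ ≤ (1 + |x|) ^ n * ((1 + |y|) ^ n * ((1 + |z|) ^ n *
      (jap (x - y - z) ^ (-D) * ‖φ (x - y - z)‖))) := by
  set w := x - y - z with hw
  have hjap : jap w ^ D ≤ ((1 + |x|) * ((1 + |y|) * (1 + |z|))) ^ n := by
    have h1 : |w| ≤ |x| + |y| + |z| := by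
      linarith [abs_sub (x - y) z, abs_sub x y]
    have h2 : 1 + |w| ≤ (1 + |x|) * ((1 + |y|) * (1 + |z|)) := by
      have hx := abs_nonneg x
      have hy := abs_nonneg y
      have hz := abs_nonneg z
      nlinarith [mul_nonneg hx hy, mul_nonneg hy hz, mul_nonneg hx hz,
        mul_nonneg (mul_nonneg hx hy) hz]
    calc jap w ^ D ≤ (1 + |w|) ^ D :=
          Real.rpow_le_rpow (jap_pos w).le (jap_le_one_add_abs w) hD
      _ ≤ (1 + |w|) ^ (n : ℝ) := Real.rpow_le_rpow_of_exponent_le (by simp) hn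
      _ = (1 + |w|) ^ n := Real.rpow_natCast _ _
      _ ≤ _ := by gcongr
  have hpos : 0 < jap w ^ D := Real.rpow_pos_of_pos (jap_pos w) D
  calc ‖φ w‖ = jap w ^ D * (jap w ^ (-D) * ‖φ w‖) := by
        rw [Real.rpow_neg (jap_pos w).le, mul_inv_cancel_left₀ hpos.ne']
    _ ≤ ((1 + |x|) * ((1 + |y|) * (1 + |z|))) ^ n * (jap w ^ (-D) * ‖φ w‖) := by
        have := Real.rpow_nonneg (jap_pos w).le (-D)
        gcongr
    _ = _ := by rw [mul_pow, mul_pow]; ring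

/-- Weighted kernel decay, with an integrable majorant and with a gain away from the origin. -/
theorem exists_invFourier_rhoLE_weighted_decay {ρ : ℝ → ℝ} (hρ : IsLPBump ρ) (n : ℕ) :
    ∃ A : ℝ, 0 < A ∧ ∀ N : ℝ, 1 ≤ N → ∀ v : ℝ,
      ‖invFourier (rhoLE ρ N) v‖ * (1 + |v|) ^ n ≤ A * (N * (1 + (N * v) ^ 2)⁻¹) ∧
      (1 < |v| → ‖invFourier (rhoLE ρ N) v‖ * (1 + |v|) ^ n ≤ A * (N ^ (2 * n + 1))⁻¹) := by
  obtain ⟨A, hA, h⟩ := exists_invFourier_rhoLE_decay hρ (2 * n + 2)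
  refine ⟨A * 2 ^ (2 * n + 2), by positivity, fun N hN v => ?_⟩
  have hN0 : 0 < N := by linarith
  have hv := abs_nonneg v
  have hNv : |v| ≤ N * |v| := le_mul_of_one_le_left hv hN
  have h2 : (1 : ℝ) ≤ 2 ^ (2 * n + 2) := one_le_pow₀ (by norm_num)
  have hK := h N hN0 v
  set κ := ‖invFourier (rhoLE ρ N) v‖
  have hκ : 0 ≤ κ := norm_nonneg _
  constructor
  · rw [← mul_assoc, ← div_eq_mul_inv, le_div_iff₀ (by positivity)]
    have e1 : 1 + (N * v) ^ 2 ≤ (1 + N * |v|) ^ 2 := by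
      rw [← sq_abs (N * v), abs_mul, abs_of_pos hN0]
      nlinarith [mul_nonneg hN0.le hv]
    calc κ * (1 + |v|) ^ n * (1 + (N * v) ^ 2)
        ≤ κ * (1 + N * |v|) ^ n * (1 + N * |v|) ^ 2 := by gcongr
      _ = κ * (1 + N * |v|) ^ (n + 2) := by ring
      _ ≤ κ * (1 + N * |v|) ^ (2 * n + 2) := by
          gcongr
          · linarith
          · linarith
      _ ≤ A * N := hK
      _ ≤ A * 2 ^ (2 * n + 2) * N := by
          gcongr
          exact le_mul_of_one_le_right hA.le h2
  · intro hv1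
    rw [← div_eq_mul_inv, le_div_iff₀ (by positivity)]
    have e : N * (1 + |v|) ≤ 2 * (1 + N * |v|) := by nlinarith
    refine le_of_mul_le_mul_right ?_ hN0
    calc κ * (1 + |v|) ^ n * N ^ (2 * n + 1) * N
        = κ * ((1 + |v|) ^ n * N ^ (2 * n + 2)) := by ring
      _ ≤ κ * ((1 + |v|) ^ (2 * n + 2) * N ^ (2 * n + 2)) := by
          gcongr
          · linarith
          · linarith
      _ = κ * (N * (1 + |v|)) ^ (2 * n + 2) := by rw [mul_pow]; ring
      _ ≤ κ * (2 * (1 + N * |v|)) ^ (2 * n + 2) := by gcongr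
      _ = κ * (1 + N * |v|) ^ (2 * n + 2) * 2 ^ (2 * n + 2) := by rw [mul_pow]; ring
      _ ≤ A * N * 2 ^ (2 * n + 2) := by gcongr
      _ = _ := by ring

/-- On functions of at most polynomial growth in mean, `P_{≤N}` factors through any sufficiently finer projection. -/
theorem PLE_reproduce {ρ : ℝ → ℝ} (hρ : IsLPBump ρ) {D : ℝ} (hD : 0 ≤ D) {N N' : ℝ} (hN : 1 ≤ N)
    (hNN' : N ≤ N' / 4) {φ : ℝ → ℂ} (hφ : Measurable φ)
    (hint : Integrable (fun x => jap x ^ (-D) * ‖φ x‖)) (x : ℝ) :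
    (√(2 * π) : ℂ) * PLE ρ N φ x =
      ∫ y : ℝ, invFourier (rhoLE ρ N) y * PLE ρ N' φ (x - y) := by
  have hN0 : 0 < N := by linarith
  have hN' : 1 ≤ N' := by linarith
  have hNpos' : 0 < N' := by linarith
  obtain ⟨n, hn⟩ := exists_nat_ge D
  obtain ⟨A, hA, hdec⟩ := exists_invFourier_rhoLE_weighted_decay hρ n
  have hcN := continuous_invFourier_rhoLE hρ hN0
  have hcN' := continuous_invFourier_rhoLE hρ hNpos'
  have hprod : Integrable (fun p : ℝ × ℝ => invFourier (rhoLE ρ N) p.2 *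
      invFourier (rhoLE ρ N') (p.1 - p.2) * φ (x - p.1)) (volume.prod volume) := by
    have hmaj := ((hint.comp_sub_left x).mul_prod
      (((integrable_inv_one_add_sq.comp_mul_left' hN0.ne').const_mul N).const_mul A)).const_mul
      ((1 + |x|) ^ n * (A * N'))
    refine hmaj.mono' ?_ (.of_forall fun p => ?_)
    · refine AEStronglyMeasurable.mul ?_
        (Measurable.aestronglyMeasurable (by fun_prop))
      exact Continuous.aestronglyMeasurable (by fun_prop)
    · obtain ⟨w, y⟩ := p
      have hw := norm_le_weight_mul hD hn φ x y (w - y)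
      rw [show x - y - (w - y) = x - w by ring] at hw
      have h1 := (hdec N hN y).1
      have h2 : ‖invFourier (rhoLE ρ N') (w - y)‖ * (1 + |w - y|) ^ n ≤ A * N' := by
        refine (hdec N' hN' (w - y)).1.trans ?_
        gcongr
        refine mul_le_of_le_one_right hNpos'.le (inv_le_one_of_one_le₀ ?_)
        nlinarith [sq_nonneg (N' * (w - y))]
      have hψ : 0 ≤ jap (x - w) ^ (-D) * ‖φ (x - w)‖ :=
        mul_nonneg (Real.rpow_nonneg (jap_pos _).le _) (norm_nonneg _)
      rw [norm_mul, norm_mul]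
      calc ‖invFourier (rhoLE ρ N) y‖ * ‖invFourier (rhoLE ρ N') (w - y)‖ * ‖φ (x - w)‖
          ≤ ‖invFourier (rhoLE ρ N) y‖ * ‖invFourier (rhoLE ρ N') (w - y)‖ *
            ((1 + |x|) ^ n * ((1 + |y|) ^ n * ((1 + |w - y|) ^ n *
              (jap (x - w) ^ (-D) * ‖φ (x - w)‖)))) := by gcongr
        _ = (1 + |x|) ^ n * (‖invFourier (rhoLE ρ N') (w - y)‖ * (1 + |w - y|) ^ n) *
            ((jap (x - w) ^ (-D) * ‖φ (x - w)‖) *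
              (‖invFourier (rhoLE ρ N) y‖ * (1 + |y|) ^ n)) := by ring
        _ ≤ (1 + |x|) ^ n * (A * N') * ((jap (x - w) ^ (-D) * ‖φ (x - w)‖) *
              (A * (N * (1 + (N * y) ^ 2)⁻¹))) := by gcongr
  calc (√(2 * π) : ℂ) * PLE ρ N φ x
      = ∫ w : ℝ, ∫ y : ℝ, invFourier (rhoLE ρ N) y * invFourier (rhoLE ρ N') (w - y) *
          φ (x - w) := by
        rw [PLE, ← integral_const_mul]
        refine integral_congr_ae (.of_forall fun w => ?_)
        simp only
        rw [integral_mul_const, integral_invFourier_rhoLE_mul hρ hN0 hNN', mul_assoc]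
    _ = ∫ y : ℝ, ∫ w : ℝ, invFourier (rhoLE ρ N) y * invFourier (rhoLE ρ N') (w - y) *
          φ (x - w) := integral_integral_swap hprod
    _ = _ := by
        refine integral_congr_ae (.of_forall fun y => ?_)
        simp only [PLE]
        rw [← integral_const_mul, ← integral_add_right_eq_self (fun w : ℝ =>
          invFourier (rhoLE ρ N) y * invFourier (rhoLE ρ N') (w - y) * φ (x - w)) y]
        refine integral_congr_ae (.of_forall fun w => ?_)
        simp only [mul_assoc, add_sub_cancel_left, sub_sub, add_comm w y]

theorem measurable_PLE {ρ : ℝ → ℝ} (hρ : IsLPBump ρ) {N : ℝ} (hN : 0 < N) {φ : ℝ → ℂ}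
    (hφ : Measurable φ) : Measurable (PLE ρ N φ) := by
  have hc := (continuous_invFourier_rhoLE hρ hN).measurable
  have h : Measurable (fun p : ℝ × ℝ => invFourier (rhoLE ρ N) p.2 * φ (p.1 - p.2)) := by
    fun_prop
  exact h.stronglyMeasurable.integral_prod_right.measurable

theorem lintegral_enorm_le_of_weighted_bound {K : ℝ → ℂ} {n : ℕ} {A N : ℝ} (hA : 0 ≤ A)
    (hN : 0 < N) (h : ∀ v, ‖K v‖ * (1 + |v|) ^ n ≤ A * (N * (1 + (N * v) ^ 2)⁻¹)) :
    ∫⁻ v, ‖K v‖ₑ ≤ ENNReal.ofReal (A * π) := by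
  calc ∫⁻ v, ‖K v‖ₑ ≤ ∫⁻ v, ENNReal.ofReal A * ENNReal.ofReal (N * (1 + (N * v) ^ 2)⁻¹) := by
        refine lintegral_mono fun v => ?_
        rw [← ENNReal.ofReal_mul hA, ← ofReal_norm]
        refine ENNReal.ofReal_le_ofReal ((le_mul_of_one_le_right (norm_nonneg _) ?_).trans (h v))
        exact one_le_pow₀ (by simp)
    _ = _ := by
        rw [lintegral_const_mul _ (by fun_prop), lintegral_inv_one_add_sq_scale hN,
          ENNReal.ofReal_mul hA]

theorem lintegral_inv_one_add_abs_sq_le {E : ℝ} (hE : 0 ≤ E) :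
    (∫⁻ x : ℝ, ENNReal.ofReal (E * (1 + |x|)⁻¹) ^ (2 : ℝ)) ^ (1 / 2 : ℝ) ≤
      ENNReal.ofReal (E * π) := by
  have h : ∫⁻ x : ℝ, ENNReal.ofReal (E * (1 + |x|)⁻¹) ^ (2 : ℝ) ≤
      ENNReal.ofReal (E * π) ^ (2 : ℝ) := by
    calc _ ≤ ∫⁻ x : ℝ, ENNReal.ofReal (E ^ 2) * ENNReal.ofReal (1 * (1 + (1 * x) ^ 2)⁻¹) := by
          refine lintegral_mono fun x => ?_
          rw [← ENNReal.ofReal_mul (by positivity), ENNReal.rpow_two,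
            ← ENNReal.ofReal_pow (by positivity)]
          refine ENNReal.ofReal_le_ofReal ?_
          rw [mul_pow, one_mul, one_mul, inv_pow]
          gcongr
          rw [← sq_abs]
          nlinarith [abs_nonneg x]
      _ = ENNReal.ofReal (E ^ 2 * π) := by
          rw [lintegral_const_mul _ (by fun_prop), lintegral_inv_one_add_sq_scale one_pos,
            ENNReal.ofReal_mul (by positivity)]
      _ ≤ _ := by
          rw [ENNReal.rpow_two, ← ENNReal.ofReal_pow (by positivity)]
          refine ENNReal.ofReal_le_ofReal ?_
          rw [mul_pow]
          gcongr
          nlinarith [Real.pi_gt_three]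
  calc _ ≤ (ENNReal.ofReal (E * π) ^ (2 : ℝ)) ^ (1 / 2 : ℝ) := by gcongr
    _ = _ := by rw [← ENNReal.rpow_mul]; norm_num

theorem lintegral_lintegral_mul_sub_sub {a ψ : ℝ → ℝ≥0∞} (ha : Measurable a) (hψ : Measurable ψ)
    (x : ℝ) : ∫⁻ y, ∫⁻ z, a z * ψ (x - y - z) = (∫⁻ z, a z) * ∫⁻ w, ψ w := by
  rw [lintegral_lintegral_swap (by fun_prop), ← lintegral_mul_const _ ha]
  refine lintegral_congr fun z => ?_
  rw [lintegral_const_mul _ (by fun_prop)]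
  congr 1
  simp_rw [sub_right_comm x _ z]
  exact lintegral_sub_left_eq_self ψ (x - z)

/-- Pointwise bound of the weighted projection by a local convolution and a decaying tail. -/
theorem enorm_sqrt_sigmaW_mul_PLE_le {ρ : ℝ → ℝ} (hρ : IsLPBump ρ) {D : ℝ} (hD : 0 ≤ D) {n : ℕ}
    (hn : D ≤ n) {A B : ℝ} (hA : 0 < A)
    (hdec : ∀ N : ℝ, 1 ≤ N → ∀ v : ℝ,
      ‖invFourier (rhoLE ρ N) v‖ * (1 + |v|) ^ n ≤ A * (N * (1 + (N * v) ^ 2)⁻¹) ∧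
      (1 < |v| → ‖invFourier (rhoLE ρ N) v‖ * (1 + |v|) ^ n ≤ A * (N ^ (2 * n + 1))⁻¹))
    (hσ : ∀ R : ℝ, 1 ≤ R → ∀ x : ℝ,
      √(sigmaW R x) * (1 + |x|) ^ n ≤ B * R ^ (n + 1) * (1 + |x|)⁻¹)
    {R R' : ℝ} (hR : 1 ≤ R) (hRR' : R ≤ R' / 4) {φ : ℝ → ℂ} (hφ : Measurable φ)
    (hint : Integrable (fun x => jap x ^ (-D) * ‖φ x‖)) (x : ℝ) :
    ‖(√(sigmaW R x) : ℂ) * PLE ρ R φ x‖ₑ ≤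
      2 * (∫⁻ y, ‖invFourier (rhoLE ρ R) y‖ₑ *
        ‖(√(sigmaW R' (x - y)) : ℂ) * PLE ρ R' φ (x - y)‖ₑ) +
      ENNReal.ofReal (B * A ^ 2 * π * (R ^ n)⁻¹ * wL1 D φ * (1 + |x|)⁻¹) := by
  have hR0 : 0 < R := by linarith
  have hRone' : 1 ≤ R' := by linarith
  have hRpos' : 0 < R' := by linarith
  have hRle : R ≤ R' := by linarith
  set s := √(sigmaW R x)
  have hs0 : 0 ≤ s := Real.sqrt_nonneg _
  set K := invFourier (rhoLE ρ R)
  set u := PLE ρ R' φ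
  have hKm : Measurable K := (continuous_invFourier_rhoLE hρ hR0).measurable
  have hum : Measurable u := measurable_PLE hρ hRpos' hφ
  have hj : Measurable jap := by unfold jap; fun_prop
  have hsm : Measurable (sigmaW R') := by unfold sigmaW; fun_prop
  set a : ℝ → ℝ≥0∞ := fun z => ENNReal.ofReal (A * (R' * (1 + (R' * z) ^ 2)⁻¹)) with ha
  set ψ : ℝ → ℝ≥0∞ := fun z => ENNReal.ofReal (jap z ^ (-D) * ‖φ z‖) with hψ
  have hψ0 : ∀ z, 0 ≤ jap z ^ (-D) * ‖φ z‖ := fun z =>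
    mul_nonneg (Real.rpow_nonneg (jap_pos z).le _) (norm_nonneg _)
  have ham : Measurable a := by fun_prop
  have hψm : Measurable ψ := by fun_prop
  set c : ℝ := s * (1 + |x|) ^ n * (A * (R ^ (2 * n + 1))⁻¹) with hc
  have hc0 : 0 ≤ c := by positivity
  have hPLE : ‖PLE ρ R φ x‖ₑ ≤ ∫⁻ y, ‖K y‖ₑ * ‖u (x - y)‖ₑ := by
    calc ‖PLE ρ R φ x‖ₑ ≤ ‖(√(2 * π) : ℂ) * PLE ρ R φ x‖ₑ := by
          rw [← ofReal_norm, ← ofReal_norm, norm_mul, Complex.norm_real,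
            norm_of_nonneg (Real.sqrt_nonneg _)]
          refine ENNReal.ofReal_le_ofReal (le_mul_of_one_le_left (norm_nonneg _) ?_)
          exact Real.one_le_sqrt.2 (by linarith [Real.pi_gt_three])
      _ = ‖∫ y, K y * u (x - y)‖ₑ := by rw [PLE_reproduce hρ hD hR hRR' hφ hint x]
      _ ≤ ∫⁻ y, ‖K y * u (x - y)‖ₑ := enorm_integral_le_lintegral_enorm _
      _ = _ := by simp_rw [enorm_mul]
  have hsplit : ∀ y, ENNReal.ofReal s * (‖K y‖ₑ * ‖u (x - y)‖ₑ) ≤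
      2 * (‖K y‖ₑ * ‖(√(sigmaW R' (x - y)) : ℂ) * u (x - y)‖ₑ) +
        ENNReal.ofReal c * ∫⁻ z, a z * ψ (x - y - z) := fun y => by
    rcases le_or_gt |y| 1 with hy | hy
    · refine le_add_right ?_
      have h1 : s ≤ 2 * √(sigmaW R' (x - y)) := (sqrt_sigmaW_le_of_near hR hy).trans
        (mul_le_mul_of_nonneg_left (sqrt_sigmaW_le_of_scale_le hR0 hRle _) (by norm_num))
      have h2 : ENNReal.ofReal s ≤ 2 * ‖(√(sigmaW R' (x - y)) : ℂ)‖ₑ := by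
        rw [← ofReal_norm, Complex.norm_real, norm_of_nonneg (Real.sqrt_nonneg _),
          ← ENNReal.ofReal_ofNat, ← ENNReal.ofReal_mul (by norm_num)]
        exact ENNReal.ofReal_le_ofReal h1
      calc _ ≤ 2 * ‖(√(sigmaW R' (x - y)) : ℂ)‖ₑ * (‖K y‖ₑ * ‖u (x - y)‖ₑ) := by gcongr
        _ = _ := by rw [enorm_mul]; ring
    · refine le_add_left ?_
      have h1 : ‖u (x - y)‖ₑ ≤
          ∫⁻ z, ‖invFourier (rhoLE ρ R') z‖ₑ * ‖φ (x - y - z)‖ₑ := by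
        refine (enorm_integral_le_lintegral_enorm _).trans_eq ?_
        simp_rw [enorm_mul]
      calc _ ≤ ENNReal.ofReal s * (‖K y‖ₑ *
            ∫⁻ z, ‖invFourier (rhoLE ρ R') z‖ₑ * ‖φ (x - y - z)‖ₑ) := by gcongr
        _ = ∫⁻ z, ENNReal.ofReal s * (‖K y‖ₑ *
            (‖invFourier (rhoLE ρ R') z‖ₑ * ‖φ (x - y - z)‖ₑ)) := by
            have := (continuous_invFourier_rhoLE hρ hRpos').measurable
            rw [lintegral_const_mul _ (by fun_prop), lintegral_const_mul _ (by fun_prop)]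
        _ ≤ ∫⁻ z, ENNReal.ofReal c * (a z * ψ (x - y - z)) := by
            refine lintegral_mono fun z => ?_
            simp only [ha, hψ, ← ofReal_norm]
            rw [← ENNReal.ofReal_mul (norm_nonneg _), ← ENNReal.ofReal_mul (norm_nonneg _),
              ← ENNReal.ofReal_mul hs0, ← ENNReal.ofReal_mul (by positivity),
              ← ENNReal.ofReal_mul hc0]
            refine ENNReal.ofReal_le_ofReal ?_
            have hKy := (hdec R hR y).2 hy
            have hKz' := (hdec R' hRone' z).1
            have hw := norm_le_weight_mul hD hn φ x y z
            have hψz := hψ0 (x - y - z)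
            set p := jap (x - y - z) ^ (-D) * ‖φ (x - y - z)‖
            calc _ ≤ s * (‖K y‖ * (‖invFourier (rhoLE ρ R') z‖ *
                  ((1 + |x|) ^ n * ((1 + |y|) ^ n * ((1 + |z|) ^ n * p))))) := by gcongr
              _ = s * (1 + |x|) ^ n * (‖K y‖ * (1 + |y|) ^ n) *
                  ((‖invFourier (rhoLE ρ R') z‖ * (1 + |z|) ^ n) * p) := by ring
              _ ≤ s * (1 + |x|) ^ n * (A * (R ^ (2 * n + 1))⁻¹) *
                  ((A * (R' * (1 + (R' * z) ^ 2)⁻¹)) * p) := by gcongr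
        _ = _ := lintegral_const_mul _ (by fun_prop)
  have haint : ∫⁻ z, a z = ENNReal.ofReal (A * π) := by
    simp only [ha, ENNReal.ofReal_mul hA.le]
    rw [lintegral_const_mul _ (by fun_prop), lintegral_inv_one_add_sq_scale hRpos']
  have hψint : ∫⁻ z, ψ z = ENNReal.ofReal (wL1 D φ) :=
    (ofReal_integral_eq_lintegral_ofReal hint (.of_forall hψ0)).symm
  have hW : 0 ≤ wL1 D φ := integral_nonneg hψ0
  have hcle : c * (A * π * wL1 D φ) ≤
      B * A ^ 2 * π * (R ^ n)⁻¹ * wL1 D φ * (1 + |x|)⁻¹ := by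
    calc c * (A * π * wL1 D φ)
        = (s * (1 + |x|) ^ n) * (A * (R ^ (2 * n + 1))⁻¹ * (A * π * wL1 D φ)) := by rw [hc]; ring
      _ ≤ (B * R ^ (n + 1) * (1 + |x|)⁻¹) * (A * (R ^ (2 * n + 1))⁻¹ * (A * π * wL1 D φ)) :=
          mul_le_mul_of_nonneg_right (hσ R hR x) (by positivity)
      _ = _ := by
          rw [show 2 * n + 1 = n + (n + 1) by ring, pow_add R n (n + 1)]
          field_simp
  calc ‖(s : ℂ) * PLE ρ R φ x‖ₑ = ENNReal.ofReal s * ‖PLE ρ R φ x‖ₑ := by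
        rw [enorm_mul, ← ofReal_norm (s : ℂ), Complex.norm_real, norm_of_nonneg hs0]
    _ ≤ ENNReal.ofReal s * ∫⁻ y, ‖K y‖ₑ * ‖u (x - y)‖ₑ := by gcongr
    _ = ∫⁻ y, ENNReal.ofReal s * (‖K y‖ₑ * ‖u (x - y)‖ₑ) :=
        (lintegral_const_mul _ (by fun_prop)).symm
    _ ≤ ∫⁻ y, (2 * (‖K y‖ₑ * ‖(√(sigmaW R' (x - y)) : ℂ) * u (x - y)‖ₑ) +
        ENNReal.ofReal c * ∫⁻ z, a z * ψ (x - y - z)) := lintegral_mono hsplit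
    _ = 2 * (∫⁻ y, ‖K y‖ₑ * ‖(√(sigmaW R' (x - y)) : ℂ) * u (x - y)‖ₑ) +
        ENNReal.ofReal (c * (A * π * wL1 D φ)) := by
        have hm : Measurable fun y => ∫⁻ z, a z * ψ (x - y - z) :=
          Measurable.lintegral_prod_right (by fun_prop)
        rw [lintegral_add_left (by fun_prop), lintegral_const_mul _ (by fun_prop),
          lintegral_const_mul _ hm, lintegral_lintegral_mul_sub_sub ham hψm, haint, hψint,
          ENNReal.ofReal_mul hc0, ENNReal.ofReal_mul (p := A * π) (by positivity)]
    _ ≤ _ := by gcongr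

/-- **Comparison of weighted frequency-truncated masses at different scales**
(Lemma 2.5, estimate (2.10)). -/
theorem PLE_weighted_L2_scales (ρ : ℝ → ℝ) (hρ : IsLPBump ρ) (D : ℝ) (hD : 1 ≤ D) :
    ∃ C : ℝ, 0 < C ∧
      ∀ R₁ R₂ : ℝ, 16 ≤ R₁ → R₁ ≤ R₂ / 4 → (∃ k : ℕ, R₁ = 2 ^ k) → (∃ k : ℕ, R₂ = 2 ^ k) →
        ∀ φ : ℝ → ℂ, Measurable φ → Integrable (fun x => jap x ^ (-D) * ‖φ x‖) →
          wSigmaL2 R₁ (PLE ρ R₁ φ) ≤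
            ENNReal.ofReal C *
              (wSigmaL2 R₂ (PLE ρ R₂ φ) +
                ENNReal.ofReal (R₁ ^ (-D)) * ENNReal.ofReal (wL1 D φ)) := by
  obtain ⟨n, hn⟩ := exists_nat_ge D
  obtain ⟨A, hA, hdec⟩ := exists_invFourier_rhoLE_weighted_decay hρ n
  obtain ⟨B, hB, hσ⟩ := exists_sqrt_sigmaW_mul_pow_le n
  refine ⟨2 * (A * π) + B * A ^ 2 * π * π, by positivity,
    fun R₁ R₂ hR₁ hR₁₂ _ _ φ hφ hint => ?_⟩
  have hR : 1 ≤ R₁ := by linarith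
  have hR₁0 : 0 < R₁ := by linarith
  have hR₂0 : 0 < R₂ := by linarith
  have hW : 0 ≤ wL1 D φ := integral_nonneg fun x =>
    mul_nonneg (Real.rpow_nonneg (jap_pos x).le _) (norm_nonneg _)
  set k : ℝ → ℝ≥0∞ := fun y => ‖invFourier (rhoLE ρ R₁) y‖ₑ
  set g : ℝ → ℝ≥0∞ := fun x => ‖(√(sigmaW R₂ x) : ℂ) * PLE ρ R₂ φ x‖ₑ with hg
  have hkm : Measurable k := (continuous_invFourier_rhoLE hρ hR₁0).measurable.enorm
  have hgm : Measurable g := by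
    have hj : Measurable jap := by unfold jap; fun_prop
    have hs : Measurable (sigmaW R₂) := by unfold sigmaW; fun_prop
    have hu := measurable_PLE hρ hR₂0 hφ
    fun_prop
  have hkint : ∫⁻ y, k y ≤ ENNReal.ofReal (A * π) :=
    lintegral_enorm_le_of_weighted_bound hA.le hR₁0 fun v => (hdec R₁ hR v).1
  set E : ℝ := B * A ^ 2 * π * (R₁ ^ n)⁻¹ * wL1 D φ with hE
  have hE0 : 0 ≤ E := by positivity
  set F : ℝ → ℝ≥0∞ := fun x => 2 * ∫⁻ y, k y * g (x - y) with hF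
  set T : ℝ → ℝ≥0∞ := fun x => ENNReal.ofReal (E * (1 + |x|)⁻¹)
  have hFm : Measurable F :=
    (Measurable.lintegral_prod_right (f := fun x y => k y * g (x - y))
      (by fun_prop)).const_mul 2
  have hTm : Measurable T := by fun_prop
  have hpt := fun x => enorm_sqrt_sigmaW_mul_PLE_le hρ (by linarith : 0 ≤ D) hn hA hdec hσ hR hR₁₂
    hφ hint x
  have hgL2 : wSigmaL2 R₂ (PLE ρ R₂ φ) = (∫⁻ x, g x ^ (2 : ℝ)) ^ (1 / 2 : ℝ) := by
    simp [wSigmaL2, eLpNorm_eq_lintegral_rpow_enorm_toReal, hg]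
  have hnear : (∫⁻ x, F x ^ (2 : ℝ)) ^ (1 / 2 : ℝ) ≤
      ENNReal.ofReal (2 * (A * π)) * wSigmaL2 R₂ (PLE ρ R₂ φ) := by
    calc _ = (∫⁻ x, (∫⁻ y, (2 * k y) * g (x - y)) ^ (2 : ℝ)) ^ (1 / 2 : ℝ) := by
          simp_rw [hF, mul_assoc]
          congr 2 with x
          rw [lintegral_const_mul _ (by fun_prop)]
      _ ≤ ((∫⁻ y, 2 * k y) ^ (2 : ℝ) * ∫⁻ x, g x ^ (2 : ℝ)) ^ (1 / 2 : ℝ) := by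
          gcongr
          exact lintegral_convolution_sq_le (hkm.const_mul 2) hgm
      _ = (2 * ∫⁻ y, k y) * wSigmaL2 R₂ (PLE ρ R₂ φ) := by
          rw [ENNReal.mul_rpow_of_nonneg _ _ (by norm_num), ← ENNReal.rpow_mul, ← hgL2,
            lintegral_const_mul _ hkm]
          norm_num
      _ ≤ _ := by
          rw [ENNReal.ofReal_mul (by norm_num), ENNReal.ofReal_ofNat]
          gcongr
  have hfar : (∫⁻ x, T x ^ (2 : ℝ)) ^ (1 / 2 : ℝ) ≤
      ENNReal.ofReal (B * A ^ 2 * π * π) *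
        (ENNReal.ofReal (R₁ ^ (-D)) * ENNReal.ofReal (wL1 D φ)) := by
    have hRn : (R₁ ^ n)⁻¹ ≤ R₁ ^ (-D) := by
      rw [← Real.rpow_natCast, ← Real.rpow_neg hR₁0.le]
      exact Real.rpow_le_rpow_of_exponent_le hR (by linarith)
    refine (lintegral_inv_one_add_abs_sq_le hE0).trans ?_
    rw [← ENNReal.ofReal_mul (by positivity), ← ENNReal.ofReal_mul (by positivity)]
    refine ENNReal.ofReal_le_ofReal ?_
    calc E * π = B * A ^ 2 * π * π * ((R₁ ^ n)⁻¹ * wL1 D φ) := by rw [hE]; ring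
      _ ≤ _ := by gcongr
  calc wSigmaL2 R₁ (PLE ρ R₁ φ)
      = (∫⁻ x, ‖(√(sigmaW R₁ x) : ℂ) * PLE ρ R₁ φ x‖ₑ ^ (2 : ℝ)) ^ (1 / 2 : ℝ) := by
        simp [wSigmaL2, eLpNorm_eq_lintegral_rpow_enorm_toReal]
    _ ≤ (∫⁻ x : ℝ, (F + T) x ^ (2 : ℝ)) ^ (1 / 2 : ℝ) := by
        gcongr with x
        exact hpt x
    _ ≤ (∫⁻ x, F x ^ (2 : ℝ)) ^ (1 / 2 : ℝ) + (∫⁻ x, T x ^ (2 : ℝ)) ^ (1 / 2 : ℝ) :=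
        ENNReal.lintegral_Lp_add_le hFm.aemeasurable hTm.aemeasurable (by norm_num)
    _ ≤ _ := add_le_add hnear hfar
    _ ≤ _ := by
        rw [mul_add]
        gcongr
        · nlinarith [show 0 ≤ B * A ^ 2 * π * π by positivity]
        · nlinarith [show 0 ≤ A * π by positivity]
end
end
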